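/- Let N, M, d, G be positive integers, H an N×M complex matrix, σ > 0, and g₀ ∈ {1,…,G}. For a family V = (V_1,…,V_G) of M×d complex matrices define X(V) = Σ_{g=1}^G H V_g V_gᴴ Hᴴ + σ² I_N and J(V) = (X(V) − H V_{g₀} V_{g₀}ᴴ Hᴴ)⁻¹. Fix an expansion family V⁰ = (V⁰_1,…,V⁰_G) and set U⁰ = X(V⁰)⁻¹ H V⁰_{g₀}, Q⁰ = I_d − (U⁰)ᴴ H V⁰_{g₀}, Â = Hᴴ U⁰ (Q⁰)⁻¹ (U⁰)ᴴ H, B̂ = −(Q⁰)⁻¹ (U⁰)ᴴ H, b̂ = Re Tr((Q⁰)⁻¹ (I_d + σ² (U⁰)ᴴ U⁰)) + log((det Q⁰).re) − d, and h(V) = Σ_{g=1}^G Re Tr(V_gᴴ Â V_g) + 2 Re Tr(B̂ V_{g₀}) + b̂. Then equality holds at the expansion point: h(V⁰) = − log((det(I_N + H V⁰_{g₀} (V⁰_{g₀})ᴴ Hᴴ J(V⁰))).re). -/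

import Mathlib

/-!
The majorizer is `h(V) = Re Tr (Q⁻¹ E(V)) + log det Q - d` with `Q = Q⁰`, where `E(V)` is the
mean-square-error matrix of the fixed receiver `U⁰` against the precoders `V`. At the expansion
point `U⁰` is the MMSE receiver, so `E(V⁰) = Q` and the trace is `d`, leaving `log det Q`. The
Woodbury identity gives `Q = (1 + Wᴴ J W)⁻¹` with `W = H V⁰_{g₀}`, and Sylvester's determinant
identity turns `det (1 + Wᴴ J W)` into `det (1 + W Wᴴ J)`.
-/

open Matrix BigOperators

/-- The interference-plus-signal covariance `X(V) = ∑ g, H V_g V_gᴴ Hᴴ + σ² I_N`. -/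
noncomputable def Xmat {N M d G : ℕ} (H : Matrix (Fin N) (Fin M) ℂ) (σ : ℝ)
    (V : Fin G → Matrix (Fin M) (Fin d) ℂ) : Matrix (Fin N) (Fin N) ℂ :=
  (∑ g, H * V g * (V g)ᴴ * Hᴴ) + ((σ : ℂ) ^ 2) • (1 : Matrix (Fin N) (Fin N) ℂ)

/-- `J(V) = (X(V) − H V_{g₀} V_{g₀}ᴴ Hᴴ)⁻¹`, the inverse interference-plus-noise covariance. -/
noncomputable def Jmat {N M d G : ℕ} (H : Matrix (Fin N) (Fin M) ℂ) (σ : ℝ) (g₀ : Fin G)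
    (V : Fin G → Matrix (Fin M) (Fin d) ℂ) : Matrix (Fin N) (Fin N) ℂ :=
  (Xmat H σ V - H * V g₀ * (V g₀)ᴴ * Hᴴ)⁻¹

open scoped ComplexOrder

section MeanSquareError

variable {α n d : Type*} [CommRing α] [StarRing α] [Fintype n] [DecidableEq d]

/-- The mean-square-error matrix of a linear receiver `U` estimating a source of identity covariance
from an observation with covariance `X`, where `W` is the cross-covariance of the observation with
the source. -/
def mseMatrix (X : Matrix n n α) (W U : Matrix n d α) : Matrix d d α :=
  1 - Uᴴ * W - Wᴴ * U + Uᴴ * X * U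

/-- The linear receiver of minimum mean-square error, for observation covariance `X` and
cross-covariance `W`. -/
noncomputable def mmseReceiver [DecidableEq n] (X : Matrix n n α) (W : Matrix n d α) :
    Matrix n d α :=
  X⁻¹ * W

theorem mseMatrix_mmseReceiver [DecidableEq n] {X : Matrix n n α} (hX : X.IsHermitian)
    (hX_unit : IsUnit X) (W : Matrix n d α) :
    mseMatrix X W (mmseReceiver X W) = 1 - (mmseReceiver X W)ᴴ * W := by
  have hXU : X * mmseReceiver X W = W :=
    mul_nonsing_inv_cancel_left _ _ ((isUnit_iff_isUnit_det X).mp hX_unit)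
  have hUX : (mmseReceiver X W)ᴴ * X = Wᴴ := by
    simpa only [conjTranspose_mul, hX.eq] using congrArg conjTranspose hXU
  rw [mseMatrix, hUX, sub_add_cancel]

end MeanSquareError

theorem inv_one_add_mul_inv_mul {α n d : Type*} [CommRing α] [Fintype n] [DecidableEq n]
    [Fintype d] [DecidableEq d] {K : Matrix n n α} {B : Matrix n d α} {C : Matrix d n α}
    (hK : IsUnit K) (hKBC : IsUnit (K + B * C)) :
    (1 + C * K⁻¹ * B)⁻¹ = 1 - C * (K + B * C)⁻¹ * B := by
  have hK_inv_inv : K⁻¹⁻¹ = K := nonsing_inv_nonsing_inv K ((isUnit_iff_isUnit_det K).mp hK)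
  have hwoodbury := add_mul_mul_inv_eq_sub (1 : Matrix d d α) C K⁻¹ B isUnit_one
    (isUnit_nonsing_inv_iff.mpr hK) (by simpa only [hK_inv_inv, inv_one, Matrix.mul_one] using hKBC)
  simpa only [hK_inv_inv, inv_one, Matrix.mul_one, Matrix.one_mul] using hwoodbury

section Covariance

variable {α ι n m d : Type*} [CommRing α] [StarRing α] [Fintype ι] [Fintype m] [Fintype d]

/-- The covariance of the signal received through the channel `H` when all precoders `V g` transmit
independent sources of identity covariance, in noise of covariance `R`. -/
def receivedCovariance (H : Matrix n m α) (R : Matrix n n α) (V : ι → Matrix m d α) :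
    Matrix n n α :=
  ∑ g, H * V g * (V g)ᴴ * Hᴴ + R

/-- The covariance of the interference and noise seen by the stream `g₀`. -/
def interferenceCovariance (H : Matrix n m α) (R : Matrix n n α) (g₀ : ι)
    (V : ι → Matrix m d α) : Matrix n n α :=
  receivedCovariance H R V - H * V g₀ * (V g₀)ᴴ * Hᴴ

theorem mul_mul_conjTranspose_mul_conjTranspose (H : Matrix n m α) (V : Matrix m d α) :
    H * V * Vᴴ * Hᴴ = H * V * (H * V)ᴴ := by
  rw [conjTranspose_mul, Matrix.mul_assoc (H * V)]

theorem interferenceCovariance_add (H : Matrix n m α) (R : Matrix n n α) (g₀ : ι)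
    (V : ι → Matrix m d α) :
    interferenceCovariance H R g₀ V + H * V g₀ * (H * V g₀)ᴴ = receivedCovariance H R V := by
  rw [interferenceCovariance, mul_mul_conjTranspose_mul_conjTranspose, sub_add_cancel]

theorem sum_trace_conjTranspose_mul_mul [Fintype n] (H : Matrix n m α) (R : Matrix n n α)
    (V : ι → Matrix m d α) (U : Matrix n d α) (P : Matrix d d α) :
    ∑ g, ((V g)ᴴ * (Hᴴ * U * P * Uᴴ * H) * V g).trace =
      (P * (Uᴴ * receivedCovariance H R V * U)).trace - (P * (Uᴴ * R * U)).trace := by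
  have hterm (g : ι) : ((V g)ᴴ * (Hᴴ * U * P * Uᴴ * H) * V g).trace =
      (P * (Uᴴ * (H * V g * (V g)ᴴ * Hᴴ) * U)).trace := by
    have := trace_mul_comm ((V g)ᴴ * Hᴴ * U) (P * Uᴴ * H * V g)
    simpa only [Matrix.mul_assoc] using this
  simp only [hterm, receivedCovariance, Matrix.mul_add, Matrix.add_mul, trace_add,
    add_sub_cancel_right, Matrix.mul_sum, Matrix.sum_mul, trace_sum]

end Covariance

variable {𝕜 : Type*} [RCLike 𝕜]

theorem log_re_inv_of_pos {z : 𝕜} (hz : 0 < z) :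
    Real.log (RCLike.re z⁻¹) = -Real.log (RCLike.re z) := by
  obtain ⟨x, -, rfl⟩ := RCLike.pos_iff_exists_ofReal.mp hz
  rw [← RCLike.ofReal_inv, RCLike.ofReal_re, RCLike.ofReal_re, Real.log_inv]

section MinimumMeanSquareError

variable {n d : Type*} {K : Matrix n n 𝕜}

theorem posDef_add_mul_conjTranspose [Finite n] [Fintype d] (hK : K.PosDef) (W : Matrix n d 𝕜) :
    (K + W * Wᴴ).PosDef :=
  hK.add_posSemidef (posSemidef_self_mul_conjTranspose W)

variable [Fintype n] [DecidableEq n] [DecidableEq d]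

theorem posDef_one_add_conjTranspose_mul_inv_mul [Finite d] (hK : K.PosDef)
    (W : Matrix n d 𝕜) : (1 + Wᴴ * K⁻¹ * W).PosDef :=
  PosDef.one.add_posSemidef (hK.inv.posSemidef.conjTranspose_mul_mul_same W)

variable [Fintype d]

theorem mseMatrix_mmseReceiver_add_mul_conjTranspose (hK : K.PosDef) (W : Matrix n d 𝕜) :
    mseMatrix (K + W * Wᴴ) W (mmseReceiver (K + W * Wᴴ) W) = (1 + Wᴴ * K⁻¹ * W)⁻¹ := by
  have hX := posDef_add_mul_conjTranspose hK W
  rw [mseMatrix_mmseReceiver hX.isHermitian hX.isUnit, inv_one_add_mul_inv_mul hK.isUnit hX.isUnit,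
    mmseReceiver, conjTranspose_mul, hX.isHermitian.inv.eq]

theorem log_det_inv_one_add_conjTranspose_mul_inv_mul (hK : K.PosDef) (W : Matrix n d 𝕜) :
    Real.log (RCLike.re (1 + Wᴴ * K⁻¹ * W)⁻¹.det) =
      -Real.log (RCLike.re (1 + W * Wᴴ * K⁻¹).det) := by
  rw [det_nonsing_inv, Ring.inverse_eq_inv',
    log_re_inv_of_pos (posDef_one_add_conjTranspose_mul_inv_mul hK W).det_pos,
    det_one_add_mul_comm (Wᴴ * K⁻¹) W, Matrix.mul_assoc W]

end MinimumMeanSquareError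

theorem re_trace_mul_conjTranspose_mul_comm {n d : Type*} [Fintype n] [Fintype d]
    {P : Matrix d d 𝕜} (hP : P.IsHermitian) (U W : Matrix n d 𝕜) :
    RCLike.re (P * (Uᴴ * W)).trace = RCLike.re (P * (Wᴴ * U)).trace := by
  rw [← RCLike.conj_re, starRingEnd_apply, ← trace_conjTranspose, conjTranspose_mul,
    conjTranspose_mul, conjTranspose_conjTranspose, hP.eq, trace_mul_comm]

section Broadcast

variable {ι n m d : Type*} [Fintype ι] [Fintype m] [Fintype d]

theorem posDef_interferenceCovariance [Finite n] (H : Matrix n m 𝕜) {R : Matrix n n 𝕜}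
    (hR : R.PosDef) (g₀ : ι) (V : ι → Matrix m d 𝕜) :
    (interferenceCovariance H R g₀ V).PosDef := by
  classical
  have hsum : interferenceCovariance H R g₀ V =
      ∑ g ∈ Finset.univ.erase g₀, H * V g * (V g)ᴴ * Hᴴ + R := by
    rw [interferenceCovariance, receivedCovariance,
      ← Finset.add_sum_erase _ _ (Finset.mem_univ g₀), add_assoc, add_sub_cancel_left]
  rw [hsum]
  refine PosDef.posSemidef_add (posSemidef_sum _ fun g _ => ?_) hR
  rw [mul_mul_conjTranspose_mul_conjTranspose]
  exact posSemidef_self_mul_conjTranspose (H * V g)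

theorem re_trace_mul_mseMatrix_receivedCovariance [Fintype n] [DecidableEq d]
    (H : Matrix n m 𝕜) (R : Matrix n n 𝕜) (g₀ : ι) (V : ι → Matrix m d 𝕜) (U : Matrix n d 𝕜)
    {P : Matrix d d 𝕜} (hP : P.IsHermitian) :
    RCLike.re (P * mseMatrix (receivedCovariance H R V) (H * V g₀) U).trace =
      ∑ g, RCLike.re ((V g)ᴴ * (Hᴴ * U * P * Uᴴ * H) * V g).trace
        + 2 * RCLike.re (-(P * Uᴴ * H) * V g₀).trace
        + RCLike.re (P * (1 + Uᴴ * R * U)).trace := by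
  have hlinear : -(P * Uᴴ * H) * V g₀ = -(P * (Uᴴ * (H * V g₀))) := by
    simp only [Matrix.neg_mul, Matrix.mul_assoc]
  have hcross := re_trace_mul_conjTranspose_mul_comm hP U (H * V g₀)
  rw [← map_sum, sum_trace_conjTranspose_mul_mul H R, hlinear]
  simp only [mseMatrix, Matrix.mul_add, Matrix.mul_sub, trace_add, trace_sub, trace_neg, map_add,
    map_sub, map_neg]
  linarith

theorem stmt3_general [Fintype n] [DecidableEq n] [DecidableEq d]
    (H : Matrix n m 𝕜) {R : Matrix n n 𝕜} (hR : R.PosDef) (g₀ : ι) (V0 : ι → Matrix m d 𝕜)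
    {U0 : Matrix n d 𝕜} (hU0 : U0 = mmseReceiver (receivedCovariance H R V0) (H * V0 g₀))
    {Q0 : Matrix d d 𝕜} (hQ0 : Q0 = 1 - U0ᴴ * (H * V0 g₀)) :
    ∑ g, RCLike.re ((V0 g)ᴴ * (Hᴴ * U0 * Q0⁻¹ * U0ᴴ * H) * V0 g).trace
        + 2 * RCLike.re (-(Q0⁻¹ * U0ᴴ * H) * V0 g₀).trace
        + (RCLike.re (Q0⁻¹ * (1 + U0ᴴ * R * U0)).trace
          + Real.log (RCLike.re Q0.det) - Fintype.card d) =
      -Real.log (RCLike.re (1 + H * V0 g₀ * (V0 g₀)ᴴ * Hᴴ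
        * (interferenceCovariance H R g₀ V0)⁻¹).det) := by
  set W := H * V0 g₀
  have hK := posDef_interferenceCovariance H hR g₀ V0
  have hX_eq := interferenceCovariance_add H R g₀ V0
  have hX : (receivedCovariance H R V0).PosDef := hX_eq ▸ posDef_add_mul_conjTranspose hK W
  have hE : mseMatrix (receivedCovariance H R V0) W U0 = Q0 := by
    rw [hQ0, hU0, mseMatrix_mmseReceiver hX.isHermitian hX.isUnit]
  have hQ_eq : Q0 = (1 + Wᴴ * (interferenceCovariance H R g₀ V0)⁻¹ * W)⁻¹ := by
    rw [← mseMatrix_mmseReceiver_add_mul_conjTranspose hK, hX_eq, ← hU0, hE]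
  have hQ : Q0.PosDef := hQ_eq ▸ (posDef_one_add_conjTranspose_mul_inv_mul hK W).inv
  have hmajorizer := re_trace_mul_mseMatrix_receivedCovariance H R g₀ V0 U0
    hQ.inv.isHermitian
  have htrace : RCLike.re (Q0⁻¹ * Q0).trace = (Fintype.card d : ℝ) := by
    rw [nonsing_inv_mul _ ((isUnit_iff_isUnit_det Q0).mp hQ.isUnit), trace_one, RCLike.natCast_re]
  have hlog := log_det_inv_one_add_conjTranspose_mul_inv_mul hK W
  rw [hE, htrace] at hmajorizer
  rw [← hQ_eq, ← mul_mul_conjTranspose_mul_conjTranspose] at hlog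
  linarith

end Broadcast

/-- Equality case of property C.a of Appendix C: the majorizer `h` is tight at the
expansion point `V⁰`. -/
theorem stmt3 (N M d G : ℕ) (hN : 0 < N) (hM : 0 < M) (hd : 0 < d) (hG : 0 < G)
    (H : Matrix (Fin N) (Fin M) ℂ) (σ : ℝ) (hσ : 0 < σ) (g₀ : Fin G)
    (V0 : Fin G → Matrix (Fin M) (Fin d) ℂ)
    (U0 : Matrix (Fin N) (Fin d) ℂ) (hU0 : U0 = (Xmat H σ V0)⁻¹ * (H * V0 g₀))
    (Q0 : Matrix (Fin d) (Fin d) ℂ) (hQ0 : Q0 = 1 - U0ᴴ * (H * V0 g₀))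
    (A : Matrix (Fin M) (Fin M) ℂ) (hA : A = Hᴴ * U0 * Q0⁻¹ * U0ᴴ * H)
    (B : Matrix (Fin d) (Fin M) ℂ) (hB : B = -(Q0⁻¹ * U0ᴴ * H))
    (b : ℝ)
    (hb : b = ((Q0⁻¹ * (1 + ((σ : ℂ) ^ 2) • (U0ᴴ * U0))).trace).re
      + Real.log (Q0.det.re) - d)
    (h : (Fin G → Matrix (Fin M) (Fin d) ℂ) → ℝ)
    (hh : ∀ V, h V = (∑ g, (((V g)ᴴ * A * V g).trace).re)
      + 2 * ((B * V g₀).trace).re + b) :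
    h V0 = - Real.log ((((1 : Matrix (Fin N) (Fin N) ℂ)
        + H * V0 g₀ * (V0 g₀)ᴴ * Hᴴ * Jmat H σ g₀ V0).det).re) := by
  have hR : (((σ : ℂ) ^ 2) • (1 : Matrix (Fin N) (Fin N) ℂ)).PosDef :=
    PosDef.one.smul (by exact_mod_cast pow_pos hσ 2)
  rw [hh, hb, hA, hB]
  simpa [Jmat, Xmat, interferenceCovariance, receivedCovariance] using
    stmt3_general H hR g₀ V0 hU0 hQ0
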